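/- arXiv:1208.5408 — 2 statements merged into one kernel-verified Lean document; each statement's English description precedes it below -/
import Mathlib

section
/- Let μ be a probability measure on [0,2π) with Fourier coefficients a_k = (1/π)E[cos(kX_μ)], b_k = (1/π)E[sin(kX_μ)], and suppose a_1 = b_1 = 0. Then the area of the associated convex set satisfies A(μ) = 1/(4π) − (π/2) Σ_{k≥2} (a_k² + b_k²)/(k²−1). In particular A(μ) ≤ 1/(4π), with equality iff μ is the uniform measure on [0,2π]. -/
open MeasureTheory Real Set

/-- Cumulative distribution function `F_μ(x) = μ([0,x])`. -/
noncomputable def cdf' (μ : Measure ℝ) (x : ℝ) : ℝ := (μ (Set.Icc 0 x)).toReal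

/-- Generalized inverse `F_μ⁻¹(y) = inf {x ≥ 0 : F_μ(x) ≥ y}`. -/
noncomputable def qf (μ : Measure ℝ) (y : ℝ) : ℝ := sInf {x : ℝ | 0 ≤ x ∧ y ≤ cdf' μ x}

/-- The curve `Z_μ(t) = ∫₀^t exp(i F_μ⁻¹(u)) du`. -/
noncomputable def Zc (μ : Measure ℝ) (t : ℝ) : ℂ :=
  ∫ u in (0:ℝ)..t, Complex.exp (Complex.I * (qf μ u))

/-- Fourier coefficient `a_k(μ) = (1/π) E[cos(k X_μ)]`. -/
noncomputable def aF (μ : Measure ℝ) (k : ℕ) : ℝ := (1/π) * ∫ x, Real.cos (k * x) ∂μ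

/-- Fourier coefficient `b_k(μ) = (1/π) E[sin(k X_μ)]`. -/
noncomputable def bF (μ : Measure ℝ) (k : ℕ) : ℝ := (1/π) * ∫ x, Real.sin (k * x) ∂μ

/-- Hurwitz area: `A(μ) = 1/(4π) − (π/2) Σ_{k≥2} (a_k² + b_k²)/(k²−1)`. -/
noncomputable def areaH (μ : Measure ℝ) : ℝ :=
  1/(4*π) - (π/2) * ∑' k : ℕ, (aF μ (k+2)^2 + bF μ (k+2)^2) / (((k:ℝ)+2)^2 - 1)

/-- Green's-theorem area of the region bounded by the curve . -/
noncomputable def areaG (μ : Measure ℝ) : ℝ :=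
  ∫ t in (0:ℝ)..1, (Zc μ t).re * Real.sin (qf μ t)

/-!
The quantile function of `μ` is monotone and pushes Lebesgue measure on `(0, 1)` forward to `μ`.
Since the curve `Z_μ` is closed, integrating Green's formula by parts along this monotone
parametrisation symmetrises the area to `A(μ) = ¼ ∬ sin |x - y| dμ(x) dμ(y)`.

On `[0, 2π]` one has `(π - θ) sin θ = 1 + ½ cos θ - 2 ∑_{k ≥ 2} cos (kθ) / (k² - 1)`, obtained from
the Fourier series of the sawtooth `π - θ`, since multiplying by `sin θ` shifts the coefficients.
Integrating the series in `θ = |x - y|` against `μ ⊗ μ` gives Hurwitz's formula, because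
`∬ cos (k (x - y)) = π² (a_k² + b_k²)`, while `∬ (x - y) sin (x - y)` vanishes by `a_1 = b_1 = 0`.

Equality in `A(μ) ≤ 1 / (4π)` forces all `a_k` and `b_k` with `k ≥ 1` to vanish, and a measure on
the circle is determined by its Fourier coefficients.
-/

open Filter Topology

/-! ### Fourier coefficients determine a measure -/

theorem ext_of_forall_integral_fourier {T : ℝ} [Fact (0 < T)] {μ ν : Measure (AddCircle T)}
    [IsFiniteMeasure μ] [IsFiniteMeasure ν]
    (h : ∀ n : ℤ, ∫ x, fourier n x ∂μ = ∫ x, fourier n x ∂ν) : μ = ν := by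
  have integral_eq_of_mem_span (g : C(AddCircle T, ℂ))
      (hg : g ∈ Submodule.span ℂ (range (fourier (T := T)))) : ∫ x, g x ∂μ = ∫ x, g x ∂ν := by
    have integrable (f : C(AddCircle T, ℂ)) (ρ : Measure (AddCircle T)) [IsFiniteMeasure ρ] :
        Integrable f ρ := f.continuous.integrable_of_hasCompactSupport (.of_compactSpace _)
    induction hg using Submodule.span_induction with
    | mem f hf => obtain ⟨n, rfl⟩ := hf; exact h n
    | zero => simp
    | add f g _ _ hf hg =>
      simp only [ContinuousMap.add_apply]
      rw [integral_add (integrable f μ) (integrable g μ),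
        integral_add (integrable f ν) (integrable g ν), hf, hg]
    | smul c f _ hf => simp only [ContinuousMap.smul_apply, integral_smul, hf]
  refine ext_of_forall_mem_subalgebra_integral_eq_of_polish (𝕜 := ℂ)
    (A := fourierSubalgebra.comap (BoundedContinuousFunction.toContinuousMapStarₐ ℂ)) ?_ ?_
  · intro x y hxy
    obtain ⟨_, ⟨f, hf, rfl⟩, hne⟩ := fourierSubalgebra_separatesPoints hxy
    exact ⟨f, ⟨f, ⟨BoundedContinuousFunction.mkOfCompact f, hf, rfl⟩, rfl⟩, hne⟩
  · intro g hg
    refine integral_eq_of_mem_span g.toContinuousMap ?_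
    rw [← fourierSubalgebra_coe]
    exact hg

theorem eq_of_map_coe_addCircle_eq {T : ℝ} [Fact (0 < T)] {a : ℝ} {μ ν : Measure ℝ}
    (hμ : ∀ᵐ x ∂μ, x ∈ Ico a (a + T)) (hν : ∀ᵐ x ∂ν, x ∈ Ico a (a + T))
    (h : μ.map ((↑) : ℝ → AddCircle T) = ν.map ((↑) : ℝ → AddCircle T)) : μ = ν := by
  have hcoe : Measurable ((↑) : ℝ → AddCircle T) := AddCircle.measurable_mk'
  have hlift : Measurable fun z : AddCircle T ↦ (AddCircle.equivIco T a z : ℝ) :=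
    measurable_subtype_coe.comp (AddCircle.measurableEquivIco T a).measurable
  have map_lift (ρ : Measure ℝ) (hρ : ∀ᵐ x ∂ρ, x ∈ Ico a (a + T)) :
      (ρ.map ((↑) : ℝ → AddCircle T)).map (fun z ↦ (AddCircle.equivIco T a z : ℝ)) = ρ := by
    rw [Measure.map_map hlift hcoe]
    conv_rhs => rw [← Measure.map_id (μ := ρ)]
    refine Measure.map_congr ?_
    filter_upwards [hρ] with x hx
    simp [AddCircle.equivIco_coe_eq hx]
  rw [← map_lift μ hμ, h, map_lift ν hν]

instance fact_two_pi_pos : Fact (0 < 2 * π) := ⟨two_pi_pos⟩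

theorem integrable_cos_comp {α : Type*} [MeasurableSpace α] {μ : Measure α} [IsFiniteMeasure μ]
    {f : α → ℝ} (hf : AEMeasurable f μ) : Integrable (fun x ↦ cos (f x)) μ :=
  .of_bound (measurable_cos.comp_aemeasurable hf).aestronglyMeasurable 1
    (ae_of_all _ fun _ ↦ abs_cos_le_one _)

theorem integrable_sin_comp {α : Type*} [MeasurableSpace α] {μ : Measure α} [IsFiniteMeasure μ]
    {f : α → ℝ} (hf : AEMeasurable f μ) : Integrable (fun x ↦ sin (f x)) μ :=
  .of_bound (measurable_sin.comp_aemeasurable hf).aestronglyMeasurable 1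
    (ae_of_all _ fun _ ↦ abs_sin_le_one _)

theorem integral_fourier_natCast (μ : Measure ℝ) [IsFiniteMeasure μ] (k : ℕ) :
    ∫ x : ℝ, fourier k (x : AddCircle (2 * π)) ∂μ = π * (aF μ k + bF μ k * Complex.I) := by
  have euler (x : ℝ) : fourier k (x : AddCircle (2 * π))
      = (cos (k * x) : ℂ) + (sin (k * x) : ℂ) * Complex.I := by
    rw [fourier_coe_apply, Complex.ofReal_cos, Complex.ofReal_sin, ← Complex.exp_mul_I]
    congr 1
    push_cast
    field_simp
  simp only [euler]
  rw [integral_add (integrable_cos_comp (by fun_prop)).ofReal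
      ((integrable_sin_comp (by fun_prop)).ofReal.mul_const _), integral_mul_const,
    integral_complex_ofReal, integral_complex_ofReal, aF, bF]
  push_cast
  field_simp

theorem integral_fourier_neg {α : Type*} [MeasurableSpace α] {T : ℝ} (μ : Measure α)
    (f : α → AddCircle T) (n : ℤ) :
    ∫ x, fourier (-n) (f x) ∂μ = starRingEnd ℂ (∫ x, fourier n (f x) ∂μ) := by
  simp only [fourier_neg, integral_conj]

theorem ext_of_aF_eq_of_bF_eq {μ ν : Measure ℝ} [IsFiniteMeasure μ] [IsFiniteMeasure ν]
    (hμ : ∀ᵐ x ∂μ, x ∈ Ico 0 (2 * π)) (hν : ∀ᵐ x ∂ν, x ∈ Ico 0 (2 * π))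
    (ha : ∀ k, aF μ k = aF ν k) (hb : ∀ k, bF μ k = bF ν k) : μ = ν := by
  rw [← zero_add (2 * π)] at hμ hν
  refine eq_of_map_coe_addCircle_eq hμ hν (ext_of_forall_integral_fourier fun n ↦ ?_)
  have integral_map_coe (ρ : Measure ℝ) : ∫ z, fourier n z ∂ρ.map ((↑) : ℝ → AddCircle (2 * π))
      = ∫ x : ℝ, fourier n (x : AddCircle (2 * π)) ∂ρ :=
    integral_map AddCircle.measurable_mk'.aemeasurable
      (fourier n).continuous.aestronglyMeasurable
  rw [integral_map_coe, integral_map_coe]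
  obtain ⟨k, rfl | rfl⟩ := n.eq_nat_or_neg
  · rw [integral_fourier_natCast, integral_fourier_natCast, ha, hb]
  · rw [integral_fourier_neg, integral_fourier_neg, integral_fourier_natCast,
      integral_fourier_natCast, ha, hb]

/-! ### The cosine series of `(π - θ) sin θ` -/

theorem fourierCoeffOn_fourier_mul {a b : ℝ} (hab : a < b) (f : ℝ → ℂ) (k n : ℤ) :
    fourierCoeffOn hab (fun x ↦ fourier k (x : AddCircle (b - a)) * f x) n
      = fourierCoeffOn hab f (n - k) := by
  simp only [fourierCoeffOn_eq_integral, smul_eq_mul, ← mul_assoc, ← fourier_add]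
  rw [neg_sub, neg_add_eq_sub]

theorem fourierCoeffOn_sub {a b : ℝ} (hab : a < b) {f g : ℝ → ℂ}
    (hf : IntervalIntegrable f volume a b) (hg : IntervalIntegrable g volume a b) (n : ℤ) :
    fourierCoeffOn hab (fun x ↦ f x - g x) n
      = fourierCoeffOn hab f n - fourierCoeffOn hab g n := by
  have hcont : ContinuousOn (fun x : ℝ ↦ fourier (-n) (x : AddCircle (b - a))) (uIcc a b) :=
    ((fourier (-n)).continuous.comp (AddCircle.continuous_mk' _)).continuousOn
  simp only [fourierCoeffOn_eq_integral, smul_eq_mul, mul_sub]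
  rw [intervalIntegral.integral_sub (hf.continuousOn_mul hcont) (hg.continuousOn_mul hcont),
    smul_sub]

theorem fourierCoeffOn_mul_sin {f : ℝ → ℂ} (hf : IntervalIntegrable f volume 0 1) (n : ℤ) :
    fourierCoeffOn zero_lt_one (fun x ↦ f x * sin (2 * π * x)) n
      = (fourierCoeffOn zero_lt_one f (n - 1) - fourierCoeffOn zero_lt_one f (n + 1))
        / (2 * Complex.I) := by
  have hint (k : ℤ) : IntervalIntegrable
      (fun x : ℝ ↦ fourier k (x : AddCircle ((1 : ℝ) - 0)) * f x) volume 0 1 :=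
    hf.continuousOn_mul ((fourier k).continuous.comp (AddCircle.continuous_mk' _)).continuousOn
  have euler : (fun x : ℝ ↦ f x * sin (2 * π * x)) = fun x : ℝ ↦ (2 * Complex.I)⁻¹ *
      (fourier 1 (x : AddCircle ((1 : ℝ) - 0)) * f x
        - fourier (-1) (x : AddCircle ((1 : ℝ) - 0)) * f x) := by
    ext x
    rw [fourier_coe_apply, fourier_coe_apply, Complex.ofReal_sin, Complex.sin, mul_inv,
      Complex.inv_I]
    push_cast
    ring_nf
  rw [euler, fourierCoeffOn.const_mul, fourierCoeffOn_sub _ (hint 1) (hint (-1)),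
    fourierCoeffOn_fourier_mul, fourierCoeffOn_fourier_mul, sub_neg_eq_add, div_eq_inv_mul]

theorem hasSum_fourierCoeffOn_mul_fourier {T : ℝ} (hT : 0 < T) {f : ℝ → ℂ}
    (hf : ContinuousOn f (Icc 0 T)) (hper : f 0 = f T) (hsum : Summable (fourierCoeffOn hT f))
    {x : ℝ} (hx : x ∈ Icc 0 T) :
    HasSum (fun n : ℤ ↦ fourierCoeffOn hT f n * fourier n (x : AddCircle T)) (f x) := by
  have : Fact (0 < T) := ⟨hT⟩
  have hcoeff (n : ℤ) : fourierCoeff (AddCircle.liftIco T 0 f) n = fourierCoeffOn hT f n := by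
    simpa only [zero_add] using! fourierCoeff_liftIco_eq (T := T) (a := 0) f n
  have hIco {y : ℝ} (hy : y ∈ Ico 0 T) :
      HasSum (fun n : ℤ ↦ fourierCoeffOn hT f n * fourier n (y : AddCircle T)) (f y) := by
    have h := has_pointwise_sum_fourier_series_of_summable
      (f := ⟨AddCircle.liftIco T 0 f, AddCircle.liftIco_zero_continuous hper hf⟩)
      (hsum.congr fun n ↦ (hcoeff n).symm) y
    simpa only [ContinuousMap.coe_mk, hcoeff, smul_eq_mul, AddCircle.liftIco_zero_coe_apply hy]
      using h
  rcases eq_or_lt_of_le hx.2 with rfl | hlt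
  · simpa only [AddCircle.coe_period, hper, QuotientAddGroup.mk_zero] using
      hIco (left_mem_Ico.2 hT)
  · exact hIco ⟨hx.1, hlt⟩

-- At `n = ±1` the formula is correct because `0⁻¹ = 0` agrees with the vanishing mean of `B₁`.
theorem fourierCoeffOn_bernoulliFun_one_mul_sin (n : ℤ) :
    fourierCoeffOn zero_lt_one (fun x : ℝ ↦ (bernoulliFun 1 x * sin (2 * π * x) : ℂ)) n
      = (4 * π)⁻¹ * (((n : ℂ) - 1)⁻¹ - ((n : ℂ) + 1)⁻¹) := by
  have hB (m : ℤ) : fourierCoeffOn zero_lt_one (fun x ↦ (bernoulliFun 1 x : ℂ)) m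
      = -(2 * π * Complex.I)⁻¹ * (m : ℂ)⁻¹ := by
    refine (bernoulliFourierCoeff_eq one_ne_zero m).trans ?_
    rw [Nat.factorial_one, Nat.cast_one, pow_one, neg_div, one_div, mul_inv, neg_mul]
  have hint : IntervalIntegrable (fun x ↦ (bernoulliFun 1 x : ℂ)) volume 0 1 :=
    (Complex.continuous_ofReal.comp (continuous_bernoulliFun 1)).intervalIntegrable 0 1
  rw [fourierCoeffOn_mul_sin hint, hB, hB, Int.cast_sub, Int.cast_add, Int.cast_one]
  have hpi : (π : ℂ) ≠ 0 := Complex.ofReal_ne_zero.2 pi_ne_zero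
  generalize ((n : ℂ) - 1)⁻¹ = u, ((n : ℂ) + 1)⁻¹ = v
  push_cast
  field_simp
  rw [Complex.I_sq]
  ring

theorem summable_inv_sub_one_sub_inv_add_one :
    Summable fun n : ℤ ↦ ((n : ℝ) - 1)⁻¹ - ((n : ℝ) + 1)⁻¹ := by
  have hsq : Summable fun n : ℤ ↦ ((n : ℝ)⁻¹) ^ 2 := by
    simpa only [one_div, inv_pow] using Real.summable_one_div_int_pow.2 one_lt_two
  have hsub : Summable fun n : ℤ ↦ (((n : ℝ) - 1)⁻¹) ^ 2 := by
    simpa [Function.comp_def] using (Equiv.subRight (1 : ℤ)).summable_iff.2 hsq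
  have hadd : Summable fun n : ℤ ↦ (((n : ℝ) + 1)⁻¹) ^ 2 := by
    simpa [Function.comp_def] using (Equiv.addRight (1 : ℤ)).summable_iff.2 hsq
  refine .of_norm_bounded ((hsub.add hadd).mul_left 2) fun n ↦ ?_
  rcases eq_or_ne n 1 with rfl | h1
  · norm_num
  rcases eq_or_ne n (-1) with rfl | h2
  · norm_num
  have h1' : (n : ℝ) - 1 ≠ 0 := sub_ne_zero.2 (mod_cast h1)
  have h2' : (n : ℝ) + 1 ≠ 0 := by rw [← sub_neg_eq_add]; exact sub_ne_zero.2 (mod_cast h2)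
  have hprod : ((n : ℝ) - 1)⁻¹ - ((n : ℝ) + 1)⁻¹ = 2 * (((n : ℝ) - 1)⁻¹ * ((n : ℝ) + 1)⁻¹) := by
    field_simp
    ring
  rw [hprod, norm_mul, Real.norm_ofNat]
  gcongr
  rw [Real.norm_eq_abs, abs_le]
  constructor <;>
    nlinarith [sq_nonneg (((n : ℝ) - 1)⁻¹ - ((n : ℝ) + 1)⁻¹),
      sq_nonneg (((n : ℝ) - 1)⁻¹ + ((n : ℝ) + 1)⁻¹)]

theorem hasSum_inv_sub_one_sub_inv_add_one_mul_cos {θ : ℝ} (hθ : θ ∈ Icc 0 (2 * π)) :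
    HasSum (fun n : ℤ ↦ (((n : ℝ) - 1)⁻¹ - ((n : ℝ) + 1)⁻¹) * cos (n * θ))
      (2 * (θ - π) * sin θ) := by
  obtain ⟨x, rfl⟩ : ∃ x, θ = 2 * π * x := ⟨θ / (2 * π), by field_simp⟩
  have hx : x ∈ Icc 0 1 :=
    ⟨nonneg_of_mul_nonneg_right hθ.1 two_pi_pos, (mul_le_iff_le_one_right two_pi_pos).1 hθ.2⟩
  have hcont : ContinuousOn (fun x : ℝ ↦ (bernoulliFun 1 x * sin (2 * π * x) : ℂ)) (Icc 0 1) := by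
    have := continuous_bernoulliFun 1
    fun_prop
  have hsum : Summable (fourierCoeffOn zero_lt_one
      fun x : ℝ ↦ (bernoulliFun 1 x * sin (2 * π * x) : ℂ)) := by
    rw [funext fourierCoeffOn_bernoulliFun_one_mul_sin]
    refine .mul_left _ ?_
    simpa using Complex.summable_ofReal.2 summable_inv_sub_one_sub_inv_add_one
  have h := Complex.hasSum_re
    ((hasSum_fourierCoeffOn_mul_fourier zero_lt_one hcont (by simp) hsum hx).mul_left (4 * π : ℂ))
  have hcoeff (n : ℤ) : (4 * π : ℂ) * ((4 * π)⁻¹ * (((n : ℂ) - 1)⁻¹ - ((n : ℂ) + 1)⁻¹) *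
      fourier n (x : AddCircle (1 : ℝ))) =
      ((((n : ℝ) - 1)⁻¹ - ((n : ℝ) + 1)⁻¹ : ℝ) : ℂ) *
        Complex.exp ((n * (2 * π * x) : ℝ) * Complex.I) := by
    rw [fourier_coe_apply]
    have : (π : ℂ) ≠ 0 := Complex.ofReal_ne_zero.2 pi_ne_zero
    push_cast
    field_simp
  simp only [fourierCoeffOn_bernoulliFun_one_mul_sin, hcoeff, Complex.re_ofReal_mul,
    Complex.exp_ofReal_mul_I_re] at h
  convert! h using 1
  rw [bernoulliFun_one]
  norm_cast
  ring

theorem hasSum_cos_div_sq_sub_one {θ : ℝ} (hθ : θ ∈ Icc 0 (2 * π)) :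
    HasSum (fun k : ℕ ↦ cos ((k + 2) * θ) / (((k : ℝ) + 2) ^ 2 - 1))
      ((1 + cos θ / 2 - (π - θ) * sin θ) / 2) := by
  have h := (hasSum_nat_add_iff' 2).2 (hasSum_inv_sub_one_sub_inv_add_one_mul_cos hθ).nat_add_neg
  convert! h.div_const 4 using 1
  · ext k
    have h1 : (k : ℝ) + 2 - 1 ≠ 0 := by linarith [k.cast_nonneg (α := ℝ)]
    have h2 : (k : ℝ) + 2 + 1 ≠ 0 := by positivity
    have hsq : ((k : ℝ) + 2) ^ 2 - 1 = (k + 2 - 1) * (k + 2 + 1) := by ring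
    push_cast
    rw [hsq, neg_mul, cos_neg, ← neg_add', neg_add_eq_sub, ← neg_sub (_ : ℝ) 1, inv_neg, inv_neg]
    field_simp
    ring
  · simp only [Finset.sum_range_succ, Finset.sum_range_zero]
    norm_num
    ring

/-! ### Area enclosed by a closed curve with monotone tangent angle -/

section MonotoneCurve

theorem integral_primitive_mul_add_mul_primitive {f g : ℝ → ℝ} {a b : ℝ}
    (hf : IntervalIntegrable f volume a b) (hg : IntervalIntegrable g volume a b) :
    ∫ t in a..b, (f t * (∫ u in a..t, g u) + (∫ u in a..t, f u) * g t)
      = (∫ t in a..b, f t) * ∫ t in a..b, g t := by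
  have hF := hf.absolutelyContinuousOnInterval_intervalIntegral left_mem_uIcc
  have hG := hg.absolutelyContinuousOnInterval_intervalIntegral left_mem_uIcc
  have key := hF.integral_deriv_mul_eq_sub hG
  rw [intervalIntegral.integral_same, zero_mul, sub_zero] at key
  rw [← key]
  refine intervalIntegral.integral_congr_ae ?_
  filter_upwards [hf.ae_hasDerivAt_integral, hg.ae_hasDerivAt_integral] with t hft hgt ht
  have ht' := uIoc_subset_uIcc ht
  rw [(hft ht' a left_mem_uIcc).deriv, (hgt ht' a left_mem_uIcc).deriv]

variable {q : ℝ → ℝ} {a b : ℝ}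

theorem intervalIntegrable_comp_of_monotoneOn (hab : a ≤ b) (hq : MonotoneOn q (Ioo a b))
    {E : Type*} [NormedAddCommGroup E] {f : ℝ → E}
    (hf : Continuous f) {C : ℝ} (hC : ∀ x, ‖f x‖ ≤ C) :
    IntervalIntegrable (fun u ↦ f (q u)) volume a b := by
  rw [intervalIntegrable_iff_integrableOn_Ioo_of_le hab]
  exact Integrable.of_bound (hf.comp_aestronglyMeasurable
    (aemeasurable_restrict_of_monotoneOn measurableSet_Ioo hq).aestronglyMeasurable) C
    (ae_of_all _ fun _ ↦ hC _)

theorem intervalIntegrable_cos_comp_of_monotoneOn (hab : a ≤ b) (hq : MonotoneOn q (Ioo a b)) :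
    IntervalIntegrable (fun u ↦ cos (q u)) volume a b :=
  intervalIntegrable_comp_of_monotoneOn hab hq continuous_cos abs_cos_le_one

theorem intervalIntegrable_sin_comp_of_monotoneOn (hab : a ≤ b) (hq : MonotoneOn q (Ioo a b)) :
    IntervalIntegrable (fun u ↦ sin (q u)) volume a b :=
  intervalIntegrable_comp_of_monotoneOn hab hq continuous_sin abs_sin_le_one

theorem integral_sin_const_sub_comp_of_monotoneOn (hab : a ≤ b) (hq : MonotoneOn q (Ioo a b))
    (x : ℝ) :
    ∫ u in a..b, sin (x - q u)
      = sin x * (∫ u in a..b, cos (q u)) - cos x * ∫ u in a..b, sin (q u) := by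
  simp only [sin_sub]
  rw [intervalIntegral.integral_sub
      ((intervalIntegrable_cos_comp_of_monotoneOn hab hq).const_mul _)
      ((intervalIntegrable_sin_comp_of_monotoneOn hab hq).const_mul _),
    intervalIntegral.integral_const_mul, intervalIntegral.integral_const_mul]

theorem integral_sin_abs_sub_of_monotoneOn (hq : MonotoneOn q (Ioo a b))
    (hcos : ∫ u in a..b, cos (q u) = 0) (hsin : ∫ u in a..b, sin (q u) = 0)
    {t : ℝ} (ht : t ∈ Ioo a b) :
    ∫ u in a..b, sin |q t - q u|
      = 2 * (sin (q t) * (∫ u in a..t, cos (q u)) - cos (q t) * ∫ u in a..t, sin (q u)) := by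
  have hab := (ht.1.trans ht.2).le
  have hql : MonotoneOn q (Ioo a t) := hq.mono (Ioo_subset_Ioo_right ht.2.le)
  have hqr : MonotoneOn q (Ioo t b) := hq.mono (Ioo_subset_Ioo_left ht.1.le)
  have hleft : ∫ u in a..t, sin |q t - q u| = ∫ u in a..t, sin (q t - q u) :=
    intervalIntegral.integral_congr_Ioo_of_le ht.1.le fun u hu ↦ by
      rw [abs_of_nonneg (sub_nonneg.2 (hq ⟨hu.1, hu.2.trans ht.2⟩ ht hu.2.le))]
  have hright : ∫ u in t..b, sin |q t - q u| = -∫ u in t..b, sin (q t - q u) := by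
    rw [← intervalIntegral.integral_neg]
    refine intervalIntegral.integral_congr_Ioo_of_le ht.2.le fun u hu ↦ ?_
    rw [abs_of_nonpos (sub_nonpos.2 (hq ht ⟨ht.1.trans hu.1, hu.2⟩ hu.1.le)), sin_neg]
  have hint {f : ℝ → ℝ} (hf : Continuous f) (hf1 : ∀ x, |f x| ≤ 1) :
      (∫ u in a..t, f (q u)) + ∫ u in t..b, f (q u) = ∫ u in a..b, f (q u) :=
    intervalIntegral.integral_add_adjacent_intervals
      (intervalIntegrable_comp_of_monotoneOn ht.1.le hql hf hf1)
      (intervalIntegrable_comp_of_monotoneOn ht.2.le hqr hf hf1)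
  have habs := hint (f := fun x ↦ sin |q t - x|) (by fun_prop) fun _ ↦ abs_sin_le_one _
  have hclosed := hint (f := fun x ↦ sin (q t - x)) (by fun_prop) fun _ ↦ abs_sin_le_one _
  rw [integral_sin_const_sub_comp_of_monotoneOn hab hq, hcos, hsin] at hclosed
  rw [← integral_sin_const_sub_comp_of_monotoneOn ht.1.le hql]
  linarith

theorem integral_integral_sin_abs_sub_of_monotoneOn (hab : a ≤ b) (hq : MonotoneOn q (Ioo a b))
    (hcos : ∫ u in a..b, cos (q u) = 0) (hsin : ∫ u in a..b, sin (q u) = 0) :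
    ∫ t in a..b, ∫ u in a..b, sin |q t - q u|
      = 4 * ∫ t in a..b, (∫ u in a..t, cos (q u)) * sin (q t) := by
  have hc := intervalIntegrable_cos_comp_of_monotoneOn hab hq
  have hs := intervalIntegrable_sin_comp_of_monotoneOn hab hq
  have hcs := hs.continuousOn_mul
    (intervalIntegral.continuousOn_primitive_interval' hc left_mem_uIcc)
  have hsc := hc.mul_continuousOn
    (intervalIntegral.continuousOn_primitive_interval' hs left_mem_uIcc)
  have hparts := integral_primitive_mul_add_mul_primitive hc hs
  rw [intervalIntegral.integral_add hsc hcs, hcos, zero_mul] at hparts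
  calc ∫ t in a..b, ∫ u in a..b, sin |q t - q u|
      = ∫ t in a..b, 2 * ((∫ u in a..t, cos (q u)) * sin (q t)
          - cos (q t) * ∫ u in a..t, sin (q u)) :=
        intervalIntegral.integral_congr_Ioo_of_le hab fun t ht ↦ by
          rw [integral_sin_abs_sub_of_monotoneOn hq hcos hsin ht, mul_comm (sin (q t))]
    _ = 4 * ∫ t in a..b, (∫ u in a..t, cos (q u)) * sin (q t) := by
        rw [intervalIntegral.integral_const_mul, intervalIntegral.integral_sub hcs hsc]
        linarith

end MonotoneCurve

/-! ### The quantile function -/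

section Quantile

theorem qf_nonneg (μ : Measure ℝ) (y : ℝ) : 0 ≤ qf μ y := Real.sInf_nonneg fun _ hx ↦ hx.1

variable {μ : Measure ℝ} [IsProbabilityMeasure μ]

theorem cdf'_eq_cdf (hμ : ∀ᵐ x ∂μ, 0 ≤ x) (x : ℝ) : cdf' μ x = ProbabilityTheory.cdf μ x := by
  rw [ProbabilityTheory.cdf_eq_real, cdf', ← measureReal_def]
  refine measureReal_congr ?_
  filter_upwards [hμ] with y hy
  exact propext (and_iff_right hy)

theorem qf_le_iff (hμ : ∀ᵐ x ∂μ, 0 ≤ x) {x y : ℝ} (hx : 0 ≤ x) (hy : y < 1) :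
    qf μ y ≤ x ↔ y ≤ cdf' μ x := by
  have hbdd : BddBelow {x : ℝ | 0 ≤ x ∧ y ≤ cdf' μ x} := ⟨0, fun _ h ↦ h.1⟩
  refine ⟨fun h ↦ ?_, fun h ↦ csInf_le hbdd ⟨hx, h⟩⟩
  have hne : {x : ℝ | 0 ≤ x ∧ y ≤ cdf' μ x}.Nonempty := by
    have hlarge := (ProbabilityTheory.tendsto_cdf_atTop μ).eventually_const_le hy
    obtain ⟨z, hz, hz0⟩ := (hlarge.and (eventually_ge_atTop 0)).exists
    exact ⟨z, hz0, by rwa [cdf'_eq_cdf hμ]⟩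
  have hlt {z : ℝ} (hz : x < z) : y ≤ ProbabilityTheory.cdf μ z := by
    obtain ⟨w, ⟨-, hw⟩, hwz⟩ := exists_lt_of_csInf_lt hne (h.trans_lt hz)
    rw [cdf'_eq_cdf hμ] at hw
    exact hw.trans (ProbabilityTheory.monotone_cdf μ hwz.le)
  rw [cdf'_eq_cdf hμ]
  exact ge_of_tendsto (((ProbabilityTheory.cdf μ).right_continuous x).mono Ioi_subset_Ici_self)
    (eventually_nhdsWithin_of_forall fun _ ↦ hlt)

theorem monotoneOn_qf (hμ : ∀ᵐ x ∂μ, 0 ≤ x) : MonotoneOn (qf μ) (Iio 1) := by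
  intro y hy z hz hyz
  rw [qf_le_iff hμ (qf_nonneg μ z) hy]
  exact hyz.trans ((qf_le_iff hμ (qf_nonneg μ z) hz).1 le_rfl)

theorem aemeasurable_qf (hμ : ∀ᵐ x ∂μ, 0 ≤ x) :
    AEMeasurable (qf μ) (volume.restrict (Ioo 0 1)) :=
  aemeasurable_restrict_of_monotoneOn measurableSet_Ioo
    ((monotoneOn_qf hμ).mono Ioo_subset_Iio_self)

theorem map_qf (hμ : ∀ᵐ x ∂μ, 0 ≤ x) : (volume.restrict (Ioo 0 1)).map (qf μ) = μ := by
  symm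
  refine Measure.ext_of_Iic _ _ fun x ↦ ?_
  rw [Measure.map_apply_of_aemeasurable (aemeasurable_qf hμ) measurableSet_Iic]
  rcases lt_or_ge x 0 with hx | hx
  · have hempty : qf μ ⁻¹' Iic x = ∅ :=
      eq_empty_of_forall_notMem fun y hy ↦ (hx.trans_le (qf_nonneg μ y)).not_ge hy
    rw [hempty, measure_empty]
    exact measure_mono_null (fun y (hy : y ≤ x) ↦ (hy.trans_lt hx).not_ge) hμ
  · have hIoc : (qf μ ⁻¹' Iic x ∩ Ioo 0 1 : Set ℝ) =ᵐ[volume] Ioc 0 (cdf' μ x) := by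
      have hne : ∀ᵐ y : ℝ, y ≠ 1 := by simp [ae_iff]
      have hle : cdf' μ x ≤ 1 := cdf'_eq_cdf hμ x ▸ ProbabilityTheory.cdf_le_one μ x
      filter_upwards [hne] with y hy
      refine propext ⟨fun h ↦ ⟨h.2.1, (qf_le_iff hμ hx h.2.2).1 h.1⟩, fun h ↦ ?_⟩
      have hy1 : y < 1 := (h.2.trans hle).lt_of_ne hy
      exact ⟨(qf_le_iff hμ hx hy1).2 h.2, h.1, hy1⟩
    rw [Measure.restrict_apply' measurableSet_Ioo, measure_congr hIoc, Real.volume_Ioc, sub_zero,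
      cdf'_eq_cdf hμ, ProbabilityTheory.ofReal_cdf]

theorem integral_comp_qf (hμ : ∀ᵐ x ∂μ, 0 ≤ x) {E : Type*} [NormedAddCommGroup E]
    [NormedSpace ℝ E] {f : ℝ → E} (hf : AEStronglyMeasurable f μ) :
    ∫ u in (0 : ℝ)..1, f (qf μ u) = ∫ x, f x ∂μ := by
  rw [← map_qf hμ] at hf
  rw [intervalIntegral.integral_of_le zero_le_one, integral_Ioc_eq_integral_Ioo,
    ← integral_map (aemeasurable_qf hμ) hf, map_qf hμ]

theorem re_Zc (hμ : ∀ᵐ x ∂μ, 0 ≤ x) {t : ℝ} (ht : t ∈ Icc 0 1) :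
    (Zc μ t).re = ∫ u in (0 : ℝ)..t, cos (qf μ u) := by
  have hint : IntervalIntegrable (fun u ↦ Complex.exp (Complex.I * qf μ u)) volume 0 t :=
    intervalIntegrable_comp_of_monotoneOn (f := fun x : ℝ ↦ Complex.exp (Complex.I * x)) ht.1
      ((monotoneOn_qf hμ).mono fun u hu ↦ hu.2.trans_le ht.2) (by fun_prop)
      fun x ↦ (Complex.norm_exp_I_mul_ofReal x).le
  have h := Complex.reCLM.intervalIntegral_comp_comm hint
  rw [Zc, ← Complex.reCLM_apply, ← h]
  simp only [Complex.reCLM_apply, mul_comm Complex.I, Complex.exp_ofReal_mul_I_re]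

theorem areaG_eq_integral_sin_abs_sub (hμ : ∀ᵐ x ∂μ, 0 ≤ x) (hcos : ∫ x, cos x ∂μ = 0)
    (hsin : ∫ x, sin x ∂μ = 0) : areaG μ = 1 / 4 * ∫ x, ∫ y, sin |x - y| ∂μ ∂μ := by
  have hinner : Continuous fun x ↦ ∫ y, sin |x - y| ∂μ :=
    continuous_of_dominated (fun x ↦ Continuous.aestronglyMeasurable (by fun_prop))
      (fun x ↦ ae_of_all _ fun y ↦ abs_sin_le_one _) (integrable_const 1)
      (ae_of_all _ fun y ↦ by fun_prop)
  have hdouble : ∫ x, ∫ y, sin |x - y| ∂μ ∂μ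
      = ∫ t in (0 : ℝ)..1, ∫ u in (0 : ℝ)..1, sin |qf μ t - qf μ u| := by
    rw [← integral_comp_qf hμ hinner.aestronglyMeasurable]
    congr 1 with t
    exact (integral_comp_qf hμ (f := fun y ↦ sin |qf μ t - y|)
      (Continuous.aestronglyMeasurable (by fun_prop))).symm
  rw [← integral_comp_qf hμ continuous_cos.aestronglyMeasurable] at hcos
  rw [← integral_comp_qf hμ continuous_sin.aestronglyMeasurable] at hsin
  have hgreen : areaG μ
      = ∫ t in (0 : ℝ)..1, (∫ u in (0 : ℝ)..t, cos (qf μ u)) * sin (qf μ t) :=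
    intervalIntegral.integral_congr_Ioo_of_le zero_le_one fun t ht ↦ by
      rw [re_Zc hμ (Ioo_subset_Icc_self ht)]
  rw [hdouble, hgreen, integral_integral_sin_abs_sub_of_monotoneOn zero_le_one
    ((monotoneOn_qf hμ).mono Ioo_subset_Iio_self) hcos hsin]
  ring

end Quantile

/-! ### The Hurwitz formula -/

theorem integral_prod_cos_mul_sub (μ ν : Measure ℝ) [IsFiniteMeasure μ] [IsFiniteMeasure ν]
    (k : ℕ) :
    ∫ p : ℝ × ℝ, cos (k * (p.1 - p.2)) ∂μ.prod ν
      = π ^ 2 * (aF μ k * aF ν k + bF μ k * bF ν k) := by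
  have hcos (ρ : Measure ℝ) [IsFiniteMeasure ρ] : Integrable (fun x ↦ cos (k * x)) ρ :=
    integrable_cos_comp (by fun_prop)
  have hsin (ρ : Measure ℝ) [IsFiniteMeasure ρ] : Integrable (fun x ↦ sin (k * x)) ρ :=
    integrable_sin_comp (by fun_prop)
  simp only [mul_sub, cos_sub]
  rw [integral_add ((hcos μ).mul_prod (hcos ν)) ((hsin μ).mul_prod (hsin ν)),
    integral_prod_mul (fun x ↦ cos (k * x)) fun y ↦ cos (k * y),
    integral_prod_mul (fun x ↦ sin (k * x)) fun y ↦ sin (k * y), aF, aF, bF, bF]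
  field_simp

theorem integrable_mul_sin_comp {α : Type*} [MeasurableSpace α] {μ : Measure α} {f g : α → ℝ}
    (hf : Integrable f μ) (hg : AEMeasurable g μ) : Integrable (fun x ↦ f x * sin (g x)) μ :=
  hf.mul_bdd (c := 1) (measurable_sin.comp_aemeasurable hg).aestronglyMeasurable
    (ae_of_all _ fun _ ↦ abs_sin_le_one _)

theorem integral_prod_mul_sin_sub_eq_zero {μ ν : Measure ℝ} [SFinite μ]
    [IsFiniteMeasure ν] {f : ℝ → ℝ} (hf : Integrable f μ)
    (hcos : ∫ y, cos y ∂ν = 0) (hsin : ∫ y, sin y ∂ν = 0) :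
    ∫ p : ℝ × ℝ, f p.1 * sin (p.1 - p.2) ∂μ.prod ν = 0 := by
  have hint : Integrable (fun p : ℝ × ℝ ↦ f p.1 * sin (p.1 - p.2)) (μ.prod ν) :=
    integrable_mul_sin_comp (hf.comp_fst ν) (by fun_prop)
  have hinner (x : ℝ) : ∫ y, sin (x - y) ∂ν = 0 := by
    have hc : Integrable cos ν := integrable_cos_comp aemeasurable_id
    have hs : Integrable sin ν := integrable_sin_comp aemeasurable_id
    simp only [sin_sub]
    rw [integral_sub (hc.const_mul _) (hs.const_mul _), integral_const_mul, integral_const_mul,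
      hcos, hsin, mul_zero, mul_zero, sub_zero]
  simp [integral_prod _ hint, integral_const_mul, hinner]

theorem integral_prod_sub_mul_sin_sub {μ : Measure ℝ} [IsFiniteMeasure μ] (hμ : Integrable id μ)
    (hcos : ∫ x, cos x ∂μ = 0) (hsin : ∫ x, sin x ∂μ = 0) :
    ∫ p : ℝ × ℝ, (p.1 - p.2) * sin (p.1 - p.2) ∂μ.prod μ = 0 := by
  set h : ℝ × ℝ → ℝ := fun p ↦ p.1 * sin (p.1 - p.2) with h_def
  have hint : Integrable h (μ.prod μ) :=
    integrable_mul_sin_comp (hμ.comp_fst μ) (by fun_prop)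
  have hzero : ∫ p, h p ∂μ.prod μ = 0 := integral_prod_mul_sin_sub_eq_zero hμ hcos hsin
  have hsymm (p : ℝ × ℝ) : (p.1 - p.2) * sin (p.1 - p.2) = h p + h p.swap := by
    simp only [h_def, Prod.fst_swap, Prod.snd_swap]
    rw [← neg_sub p.1 p.2, sin_neg]
    ring
  have hswap : Integrable (fun p : ℝ × ℝ ↦ h p.swap) (μ.prod μ) := hint.swap
  simp only [hsymm]
  rw [integral_add hint hswap, integral_prod_swap, hzero, add_zero]

theorem integrable_id_of_ae_mem_Ico {μ : Measure ℝ} [IsFiniteMeasure μ] {a b : ℝ}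
    (hμ : ∀ᵐ x ∂μ, x ∈ Ico a b) : Integrable id μ :=
  .of_mem_Icc a b aemeasurable_id (hμ.mono fun _ hx ↦ Ico_subset_Icc_self hx)

theorem natCast_add_two_sq_sub_one_pos (k : ℕ) : 0 < ((k : ℝ) + 2) ^ 2 - 1 := by
  nlinarith [k.cast_nonneg (α := ℝ)]

/-- The even function which is the sum of the cosine series `∑ k ≥ 2, cos (k θ) / (k ^ 2 - 1)` for
`|θ| ≤ 2 * π`. The product `(π - |θ|) * sin |θ|` is expanded so that only `sin |θ|` involves an
absolute value. -/
noncomputable def hurwitzKernel (θ : ℝ) : ℝ := (1 + cos θ / 2 - (π * sin |θ| - θ * sin θ)) / 2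

theorem hasSum_hurwitzKernel {θ : ℝ} (hθ : |θ| ≤ 2 * π) :
    HasSum (fun k : ℕ ↦ cos ((k + 2) * θ) / (((k : ℝ) + 2) ^ 2 - 1)) (hurwitzKernel θ) := by
  have h := hasSum_cos_div_sq_sub_one ⟨abs_nonneg θ, hθ⟩
  rw [hurwitzKernel]
  rcases abs_choice θ with hθ' | hθ' <;>
    simp only [hθ', mul_neg, cos_neg, sin_neg] at h ⊢ <;> convert! h using 1 <;> ring

theorem hasSum_integral_prod_hurwitzKernel {μ ν : Measure ℝ} [IsFiniteMeasure μ]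
    [IsFiniteMeasure ν] (hμ : ∀ᵐ x ∂μ, x ∈ Ico 0 (2 * π)) (hν : ∀ᵐ x ∂ν, x ∈ Ico 0 (2 * π)) :
    HasSum (fun k : ℕ ↦ π ^ 2 * (aF μ (k + 2) * aF ν (k + 2) + bF μ (k + 2) * bF ν (k + 2))
        / (((k : ℝ) + 2) ^ 2 - 1))
      (∫ p : ℝ × ℝ, hurwitzKernel (p.1 - p.2) ∂μ.prod ν) := by
  have habs : ∀ᵐ p ∂μ.prod ν, |p.1 - p.2| ≤ 2 * π := by
    filter_upwards [Measure.quasiMeasurePreserving_fst.ae hμ,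
      Measure.quasiMeasurePreserving_snd.ae hν] with p hx hy
    rw [abs_le]
    constructor <;> linarith [hx.1, hx.2, hy.1, hy.2]
  have hbound : Summable fun k : ℕ ↦ 1 / (((k : ℝ) + 2) ^ 2 - 1) := by
    simpa using (hasSum_hurwitzKernel (θ := 0) (by simp [pi_pos.le])).summable
  have hterm (k : ℕ) (θ : ℝ) :
      ‖cos ((k + 2) * θ) / (((k : ℝ) + 2) ^ 2 - 1)‖ ≤ 1 / (((k : ℝ) + 2) ^ 2 - 1) := by
    have hk := natCast_add_two_sq_sub_one_pos k
    rw [norm_div, Real.norm_of_nonneg hk.le]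
    gcongr
    exact abs_cos_le_one _
  have h := hasSum_integral_of_dominated_convergence (μ := μ.prod ν)
    (F := fun (k : ℕ) p ↦ cos ((k + 2) * (p.1 - p.2)) / (((k : ℝ) + 2) ^ 2 - 1))
    (fun k _ ↦ 1 / (((k : ℝ) + 2) ^ 2 - 1))
    (fun k ↦ Continuous.aestronglyMeasurable (by fun_prop)) (fun k ↦ ae_of_all _ fun _ ↦ hterm k _)
    (ae_of_all _ fun _ ↦ hbound) (integrable_const _) (habs.mono fun _ ↦ hasSum_hurwitzKernel)
  convert! h using 2 with k
  have hcos := integral_prod_cos_mul_sub μ ν (k + 2)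
  push_cast at hcos
  rw [integral_div, hcos]

theorem integral_prod_hurwitzKernel {μ : Measure ℝ} [IsProbabilityMeasure μ]
    (hμ : Integrable id μ) (hcos : ∫ x, cos x ∂μ = 0) (hsin : ∫ x, sin x ∂μ = 0) :
    ∫ p : ℝ × ℝ, hurwitzKernel (p.1 - p.2) ∂μ.prod μ
      = (1 - π * ∫ x, ∫ y, sin |x - y| ∂μ ∂μ) / 2 := by
  have hcos_sub : ∫ p : ℝ × ℝ, cos (p.1 - p.2) ∂μ.prod μ = 0 := by
    simpa [aF, bF, hcos, hsin] using integral_prod_cos_mul_sub μ μ 1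
  have hint_cos : Integrable (fun p : ℝ × ℝ ↦ cos (p.1 - p.2) / 2) (μ.prod μ) :=
    (integrable_cos_comp (by fun_prop)).div_const 2
  have hint_one_add : Integrable (fun p : ℝ × ℝ ↦ 1 + cos (p.1 - p.2) / 2) (μ.prod μ) :=
    (integrable_const 1).add hint_cos
  have hint_sin : Integrable (fun p : ℝ × ℝ ↦ sin |p.1 - p.2|) (μ.prod μ) :=
    integrable_sin_comp (by fun_prop)
  have hint_mul_sin : Integrable (fun p : ℝ × ℝ ↦ (p.1 - p.2) * sin (p.1 - p.2)) (μ.prod μ) :=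
    integrable_mul_sin_comp ((hμ.comp_fst μ).sub (hμ.comp_snd μ)) (by fun_prop)
  have hint_sub : Integrable (fun p : ℝ × ℝ ↦
      π * sin |p.1 - p.2| - (p.1 - p.2) * sin (p.1 - p.2)) (μ.prod μ) :=
    (hint_sin.const_mul π).sub hint_mul_sin
  simp only [hurwitzKernel]
  rw [integral_div, integral_sub hint_one_add hint_sub,
    integral_add (integrable_const 1) hint_cos, integral_sub (hint_sin.const_mul π) hint_mul_sin,
    integral_div, integral_const_mul, hcos_sub, integral_prod_sub_mul_sin_sub hμ hcos hsin,
    integral_prod _ hint_sin]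
  simp

theorem hasSum_hurwitz {μ : Measure ℝ} [IsProbabilityMeasure μ]
    (hμ : ∀ᵐ x ∂μ, x ∈ Ico 0 (2 * π)) (ha1 : aF μ 1 = 0) (hb1 : bF μ 1 = 0) :
    HasSum (fun k : ℕ ↦ (aF μ (k + 2) ^ 2 + bF μ (k + 2) ^ 2) / (((k : ℝ) + 2) ^ 2 - 1))
      ((1 - 4 * π * areaG μ) / (2 * π ^ 2)) := by
  have hcos : ∫ x, cos x ∂μ = 0 := by simpa [aF, pi_ne_zero] using ha1
  have hsin : ∫ x, sin x ∂μ = 0 := by simpa [bF, pi_ne_zero] using hb1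
  have h := hasSum_integral_prod_hurwitzKernel hμ hμ
  rw [integral_prod_hurwitzKernel (integrable_id_of_ae_mem_Ico hμ) hcos hsin] at h
  rw [areaG_eq_integral_sin_abs_sub (hμ.mono fun _ hx ↦ hx.1) hcos hsin]
  convert! h.div_const (π ^ 2) using 1
  · ext k
    field_simp
  · field_simp

theorem hurwitz_term_nonneg (μ : Measure ℝ) (k : ℕ) :
    0 ≤ (aF μ (k + 2) ^ 2 + bF μ (k + 2) ^ 2) / (((k : ℝ) + 2) ^ 2 - 1) :=
  div_nonneg (by positivity) (natCast_add_two_sq_sub_one_pos k).le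

theorem hurwitz_term_eq_zero_iff {μ : Measure ℝ} {k : ℕ} :
    (aF μ (k + 2) ^ 2 + bF μ (k + 2) ^ 2) / (((k : ℝ) + 2) ^ 2 - 1) = 0
      ↔ aF μ (k + 2) = 0 ∧ bF μ (k + 2) = 0 := by
  rw [div_eq_zero_iff, or_iff_left (natCast_add_two_sq_sub_one_pos k).ne',
    add_eq_zero_iff_of_nonneg (sq_nonneg _) (sq_nonneg _), sq_eq_zero_iff, sq_eq_zero_iff]

theorem areaG_eq_areaH {μ : Measure ℝ} [IsProbabilityMeasure μ]
    (hμ : ∀ᵐ x ∂μ, x ∈ Ico 0 (2 * π)) (ha1 : aF μ 1 = 0) (hb1 : bF μ 1 = 0) :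
    areaG μ = areaH μ := by
  rw [areaH, (hasSum_hurwitz hμ ha1 hb1).tsum_eq]
  field_simp
  ring

theorem areaG_eq_one_div_four_pi_iff_forall_aF_bF_eq_zero {μ : Measure ℝ} [IsProbabilityMeasure μ]
    (hμ : ∀ᵐ x ∂μ, x ∈ Ico 0 (2 * π)) (ha1 : aF μ 1 = 0) (hb1 : bF μ 1 = 0) :
    areaG μ = 1 / (4 * π) ↔ ∀ k ≠ 0, aF μ k = 0 ∧ bF μ k = 0 := by
  have hsum := (hasSum_hurwitz hμ ha1 hb1).summable
  rw [areaG_eq_areaH hμ ha1 hb1, areaH, sub_eq_self, mul_eq_zero, or_iff_right (by positivity),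
    ← hsum.hasSum_iff, hasSum_zero_iff_of_nonneg (hurwitz_term_nonneg μ), funext_iff]
  simp only [Pi.zero_apply, hurwitz_term_eq_zero_iff]
  refine ⟨fun h k hk ↦ ?_, fun h k ↦ h (k + 2) (by lia)⟩
  match k, hk with
  | 1, _ => exact ⟨ha1, hb1⟩
  | k + 2, _ => exact h k

/-! ### The uniform measure -/

theorem setIntegral_Ico_comp_natCast_mul {f F : ℝ → ℝ} (hF : ∀ x, HasDerivAt F (f x) x)
    (hf : Continuous f) {T : ℝ} (hT : 0 ≤ T) (hper : F.Periodic T) {k : ℕ} (hk : k ≠ 0) :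
    ∫ x in Ico 0 T, f (k * x) = 0 := by
  rw [integral_Ico_eq_integral_Ioc, ← intervalIntegral.integral_of_le hT,
    intervalIntegral.integral_comp_mul_left _ (Nat.cast_ne_zero.2 hk), mul_zero,
    intervalIntegral.integral_eq_sub_of_hasDerivAt (fun x _ ↦ hF x) (hf.intervalIntegrable _ _),
    hper.nat_mul_eq, sub_self, smul_zero]

open scoped ProbabilityTheory

theorem cond_volume_Ico (a b : ℝ) : volume[|Ico a b]
    = (ENNReal.ofReal (b - a))⁻¹ • volume.restrict (Ico a b) := by
  rw [ProbabilityTheory.cond, Real.volume_Ico]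

theorem aF_cond_Ico_two_pi {k : ℕ} (hk : k ≠ 0) : aF volume[|Ico 0 (2 * π)] k = 0 := by
  rw [aF, cond_volume_Ico, integral_smul_measure, setIntegral_Ico_comp_natCast_mul hasDerivAt_sin
    continuous_cos two_pi_pos.le sin_periodic hk, smul_zero, mul_zero]

theorem bF_cond_Ico_two_pi {k : ℕ} (hk : k ≠ 0) : bF volume[|Ico 0 (2 * π)] k = 0 := by
  have hderiv (x : ℝ) : HasDerivAt (fun x ↦ -cos x) (sin x) x := by
    simpa only [neg_neg] using! (hasDerivAt_cos x).neg
  have hper : Function.Periodic (fun x ↦ -cos x) (2 * π) := fun x ↦ by simp only [cos_periodic x]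
  rw [bF, cond_volume_Ico, integral_smul_measure, setIntegral_Ico_comp_natCast_mul hderiv
    continuous_sin two_pi_pos.le hper hk, smul_zero, mul_zero]

theorem eq_cond_Ico_iff_forall_aF_bF_eq_zero {μ : Measure ℝ} [IsProbabilityMeasure μ]
    (hμ : ∀ᵐ x ∂μ, x ∈ Ico 0 (2 * π)) :
    μ = volume[|Ico 0 (2 * π)] ↔ ∀ k ≠ 0, aF μ k = 0 ∧ bF μ k = 0 := by
  have hvol : volume (Ico 0 (2 * π)) ≠ 0 := by simp [pi_pos]
  have : IsProbabilityMeasure volume[|Ico 0 (2 * π)] :=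
    ProbabilityTheory.cond_isProbabilityMeasure_of_finite hvol measure_Ico_lt_top.ne
  refine ⟨?_, fun h ↦ ext_of_aF_eq_of_bF_eq hμ
    (ProbabilityTheory.ae_cond_mem measurableSet_Ico) ?_ ?_⟩
  · rintro rfl k hk
    exact ⟨aF_cond_Ico_two_pi hk, bF_cond_Ico_two_pi hk⟩
  · rintro (_ | k)
    · simp [aF]
    · rw [(h _ k.succ_ne_zero).1, aF_cond_Ico_two_pi k.succ_ne_zero]
  · rintro (_ | k)
    · simp [bF]
    · rw [(h _ k.succ_ne_zero).2, bF_cond_Ico_two_pi k.succ_ne_zero]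

theorem stmt4 (μ : Measure ℝ) [IsProbabilityMeasure μ]
    (hsupp : μ (Set.Ico 0 (2*π))ᶜ = 0)
    (ha1 : aF μ 1 = 0) (hb1 : bF μ 1 = 0) :
    areaG μ = 1/(4*π) - (π/2) * ∑' k : ℕ, (aF μ (k+2)^2 + bF μ (k+2)^2) / (((k:ℝ)+2)^2 - 1)
    ∧ areaG μ ≤ 1/(4*π)
    ∧ (areaG μ = 1/(4*π) ↔
        μ = (ENNReal.ofReal (2*π))⁻¹ • volume.restrict (Set.Ico 0 (2*π))) := by
  have hμ : ∀ᵐ x ∂μ, x ∈ Ico 0 (2 * π) := hsupp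
  have hurwitz : areaG μ = areaH μ := areaG_eq_areaH hμ ha1 hb1
  refine ⟨hurwitz, ?_, ?_⟩
  · rw [hurwitz]
    exact sub_le_self _ (mul_nonneg (by positivity) (tsum_nonneg (hurwitz_term_nonneg μ)))
  · rw [areaG_eq_one_div_four_pi_iff_forall_aF_bF_eq_zero hμ ha1 hb1,
      ← eq_cond_Ico_iff_forall_aF_bF_eq_zero hμ, cond_volume_Ico, sub_zero]
end

section
/- Let μ, ν ∈ M⁰_T and λ ∈ [0,1]. Then the compact convex set associated with the mixture λμ + (1−λ)ν equals the Minkowski sum λ C_μ + (1−λ) C_ν, where C_μ, C_ν are the convex sets associated with μ and ν. -/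
open MeasureTheory Real Set Pointwise

/-- The compact convex set associated with a measure: the convex hull of the boundary curve. -/
noncomputable def CCS (μ : Measure ℝ) : Set ℂ := convexHull ℝ (Zc μ '' Set.Icc (0:ℝ) 1)

/-!
Two closed convex sets are equal as soon as every linear functional attains its maximum over both of
them at a common point. A functional on the plane is, up to a nonnegative factor, the outer normal
`outerNormal x` at tangent angle `x ∈ [0, 2π)`. The curve `Zc ρ` turns counterclockwise, so this
functional increases while the tangent angle is in `[x - π, x]`, decreases while it is in
`[x, x + π]`, and, since the curve closes up, is maximal at the point `Zc ρ (cdf' ρ x)` where the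
tangent angle passes `x`. The quantile transform `qf ρ` turns that point into
`∫ s in Iic x, exp (i s) ∂ρ`, which is affine in `ρ`. The maximiser for a mixture is therefore the
mixture of the maximisers, which is also a maximiser over the Minkowski sum.
-/

/-! ### Convex sets and linear functionals -/

section Convex

variable {E : Type*} [AddCommGroup E] [Module ℝ E]

lemma convexHull_range_eq_image_stdSimplex {ι : Type*} [Fintype ι] (z : ι → E) :
    convexHull ℝ (range z) = (fun w : ι → ℝ => ∑ i, w i • z i) '' stdSimplex ℝ ι := by
  classical
  have hvertices : range z = Fintype.linearCombination ℝ z '' range (Pi.single · 1) := by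
    rw [← range_comp]
    congr 1
    ext i
    simp
  rw [hvertices, ← LinearMap.image_convexHull, convexHull_rangle_single_eq_stdSimplex]
  rfl

lemma exists_fin_range_of_mem_convexHull [FiniteDimensional ℝ E] {s : Set E} {x : E}
    (hx : x ∈ convexHull ℝ s) :
    ∃ z : Fin (Module.finrank ℝ E + 1) → E, range z ⊆ s ∧ x ∈ convexHull ℝ (range z) := by
  rw [convexHull_eq_union] at hx
  simp only [mem_iUnion, exists_prop] at hx
  obtain ⟨t, hts, hind, hxt⟩ := hx
  have hcard : Fintype.card t ≤ Fintype.card (Fin (Module.finrank ℝ E + 1)) := by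
    simpa using hind.card_le_finrank_succ.trans (Nat.succ_le_succ (Submodule.finrank_le _))
  have : Nonempty t := (convexHull_nonempty_iff.1 ⟨x, hxt⟩).to_subtype
  obtain ⟨e⟩ := Function.Embedding.nonempty_of_card_le hcard
  have hrange : range (fun i => ((Function.invFun e i : t) : E)) = t := by
    rw [← Function.comp_def, (Function.invFun_surjective e.injective).range_comp]
    exact Subtype.range_coe
  exact ⟨_, hrange ▸ hts, hrange ▸ hxt⟩

lemma isMaxOn_convexHull {f : E → ℝ} {s : Set E} {a : E} (hf : ConvexOn ℝ (convexHull ℝ s) f)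
    (h : IsMaxOn f s a) : IsMaxOn f (convexHull ℝ s) a := by
  have hsub : convexHull ℝ s ⊆ {y ∈ convexHull ℝ s | f y ≤ f a} :=
    convexHull_min (fun _ hy => ⟨subset_convexHull ℝ s hy, h hy⟩) (hf.convex_le (f a))
  exact fun _ hx => (hsub hx).2

lemma isMaxOn_smul_add_smul {F : Type*} [FunLike F E ℝ] [LinearMapClass F ℝ E ℝ] {f : F}
    {A B : Set E} {p q : E} {a b : ℝ} (ha : 0 ≤ a) (hb : 0 ≤ b) (hp : IsMaxOn f A p)
    (hq : IsMaxOn f B q) : IsMaxOn f (a • A + b • B) (a • p + b • q) := by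
  rintro _ ⟨_, ⟨x, hx, rfl⟩, _, ⟨y, hy, rfl⟩, rfl⟩
  simp only [mem_ofPred_eq, map_add, map_smul, smul_eq_mul]
  exact add_le_add (mul_le_mul_of_nonneg_left (hp hx) ha) (mul_le_mul_of_nonneg_left (hq hy) hb)

variable [TopologicalSpace E] [ContinuousSMul ℝ E]

lemma isCompact_convexHull_of_isCompact [ContinuousAdd E] [FiniteDimensional ℝ E] {s : Set E}
    (hs : IsCompact s) : IsCompact (convexHull ℝ s) := by
  let ι := Fin (Module.finrank ℝ E + 1)
  have hcombinations : convexHull ℝ s = (fun wz : (ι → ℝ) × (ι → E) => ∑ i, wz.1 i • wz.2 i) ''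
      (stdSimplex ℝ ι ×ˢ univ.pi fun _ => s) := by
    refine Subset.antisymm (fun x hx => ?_) ?_
    · obtain ⟨z, hzs, hxz⟩ := exists_fin_range_of_mem_convexHull hx
      rw [convexHull_range_eq_image_stdSimplex] at hxz
      obtain ⟨w, hw, rfl⟩ := hxz
      exact ⟨(w, z), ⟨hw, fun i _ => hzs (mem_range_self i)⟩, rfl⟩
    · rintro _ ⟨⟨w, z⟩, ⟨⟨hw, hw1⟩, hz⟩, rfl⟩
      exact (convex_convexHull ℝ s).sum_mem (fun i _ => hw i) hw1
        fun i _ => subset_convexHull ℝ s (hz i trivial)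
  rw [hcombinations]
  exact ((isCompact_stdSimplex ℝ ι).prod (isCompact_univ_pi fun _ => hs)).image (by fun_prop)

variable [IsTopologicalAddGroup E] [LocallyConvexSpace ℝ E]

lemma subset_of_forall_exists_isMaxOn {A B : Set E} (hBconv : Convex ℝ B) (hBclosed : IsClosed B)
    (h : ∀ f : E →L[ℝ] ℝ, ∃ b ∈ B, IsMaxOn f A b) : A ⊆ B := by
  intro a ha
  by_contra haB
  obtain ⟨f, u, hBu, hua⟩ := geometric_hahn_banach_closed_point hBconv hBclosed haB
  obtain ⟨b, hb, hmax⟩ := h f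
  exact lt_irrefl _ ((hua.trans_le (hmax ha)).trans (hBu b hb))

lemma eq_of_forall_exists_common_isMaxOn {A B : Set E} (hAconv : Convex ℝ A) (hAclosed : IsClosed A)
    (hBconv : Convex ℝ B) (hBclosed : IsClosed B)
    (h : ∀ f : E →L[ℝ] ℝ, ∃ p ∈ A ∩ B, IsMaxOn f A p ∧ IsMaxOn f B p) : A = B := by
  refine Subset.antisymm (subset_of_forall_exists_isMaxOn hBconv hBclosed fun f => ?_)
    (subset_of_forall_exists_isMaxOn hAconv hAclosed fun f => ?_)
  · obtain ⟨p, hp, hA, -⟩ := h f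
    exact ⟨p, hp.2, hA⟩
  · obtain ⟨p, hp, -, hB⟩ := h f
    exact ⟨p, hp.1, hB⟩

end Convex

/-! ### Convex combinations of measures -/

section ConvexCombination

variable {Ω : Type*} [MeasurableSpace Ω] {μ ν : Measure Ω} {a b : ℝ}

lemma isProbabilityMeasure_ofReal_smul_add [IsProbabilityMeasure μ] [IsProbabilityMeasure ν]
    (ha : 0 ≤ a) (hb : 0 ≤ b) (hab : a + b = 1) :
    IsProbabilityMeasure (ENNReal.ofReal a • μ + ENNReal.ofReal b • ν) :=
  ⟨by simp [← ENNReal.ofReal_add ha hb, hab]⟩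

lemma integral_ofReal_smul_add {E : Type*} [NormedAddCommGroup E] [NormedSpace ℝ E] {φ : Ω → E}
    (ha : 0 ≤ a) (hb : 0 ≤ b) (hμ : Integrable φ μ) (hν : Integrable φ ν) :
    ∫ s, φ s ∂(ENNReal.ofReal a • μ + ENNReal.ofReal b • ν) =
      a • ∫ s, φ s ∂μ + b • ∫ s, φ s ∂ν := by
  rw [integral_add_measure (hμ.smul_measure ENNReal.ofReal_ne_top)
    (hν.smul_measure ENNReal.ofReal_ne_top), integral_smul_measure, integral_smul_measure,
    ENNReal.toReal_ofReal ha, ENNReal.toReal_ofReal hb]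

end ConvexCombination

/-! ### Functionals on the plane -/

/-- The functional `z ↦ ⟨z, exp (i (x - π/2))⟩`, written in coordinates. Its direction is the outer
normal of a counterclockwise convex curve at the point where the tangent is `exp (i x)`. -/
noncomputable def outerNormal (x : ℝ) : ℂ →L[ℝ] ℝ :=
  sin x • Complex.reCLM - cos x • Complex.imCLM

lemma outerNormal_exp (x s : ℝ) :
    outerNormal x (Complex.exp (Complex.I * s)) = sin (x - s) := by
  simp [outerNormal, mul_comm Complex.I, Complex.exp_ofReal_mul_I_re, Complex.exp_ofReal_mul_I_im,
    sin_sub]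

lemma outerNormal_antiperiodic : Function.Antiperiodic outerNormal π := fun x => by
  simp only [outerNormal, sin_add_pi, cos_add_pi]
  module

lemma outerNormal_periodic : Function.Periodic outerNormal (2 * π) :=
  outerNormal_antiperiodic.periodic_two_mul

lemma exists_eq_smul_outerNormal (f : ℂ →L[ℝ] ℝ) :
    ∃ A x : ℝ, 0 ≤ A ∧ x ∈ Ico 0 (2 * π) ∧ f = A • outerNormal x := by
  let w : ℂ := ⟨-f Complex.I, f 1⟩
  obtain ⟨x, hx, harg⟩ := outerNormal_periodic.exists_mem_Ico₀ two_pi_pos w.arg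
  refine ⟨‖w‖, x, norm_nonneg w, hx, ?_⟩
  have hcos : ‖w‖ * cos w.arg = -f Complex.I := Complex.norm_mul_cos_arg w
  have hsin : ‖w‖ * sin w.arg = f 1 := Complex.norm_mul_sin_arg w
  rw [← harg]
  ext z
  calc f z = f (z.re • (1 : ℂ) + z.im • Complex.I) := by simp [Complex.re_add_im]
    _ = z.re * f 1 + z.im * f Complex.I := by simp only [map_add, map_smul, smul_eq_mul]
    _ = ‖w‖ * (sin w.arg * z.re - cos w.arg * z.im) := by
      linear_combination -z.re * hsin + z.im * hcos
    _ = (‖w‖ • outerNormal w.arg) z := by simp [outerNormal]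

/-! ### The quantile function -/

lemma cdf'_nonneg (ρ : Measure ℝ) (x : ℝ) : 0 ≤ cdf' ρ x := ENNReal.toReal_nonneg

lemma cdf'_mem_Icc (ρ : Measure ℝ) [IsProbabilityMeasure ρ] (x : ℝ) : cdf' ρ x ∈ Icc (0 : ℝ) 1 :=
  ⟨cdf'_nonneg ρ x, measureReal_le_one⟩

lemma cdf'_of_neg (ρ : Measure ℝ) {x : ℝ} (hx : x < 0) : cdf' ρ x = 0 := by
  simp [cdf', Icc_eq_empty_of_lt hx]

lemma monotone_cdf' (ρ : Measure ℝ) [IsFiniteMeasure ρ] : Monotone (cdf' ρ) := fun _ _ hxy =>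
  measureReal_mono (Icc_subset_Icc_right hxy)

section Quantile

variable {ρ : Measure ℝ} [IsProbabilityMeasure ρ]

lemma cdf'_eq_cdf_s11 (hρ : ρ (Iio 0) = 0) : cdf' ρ = ProbabilityTheory.cdf ρ := by
  ext x
  rw [ProbabilityTheory.cdf_eq_real, cdf', ← measureReal_def]
  refine measureReal_congr ?_
  filter_upwards [measure_eq_zero_iff_ae_notMem.1 hρ] with y hy
  exact propext (and_iff_right (not_lt.1 hy))

lemma le_cdf'_qf (hρ : ρ (Iio 0) = 0) {u : ℝ} (hu : u < 1) : u ≤ cdf' ρ (qf ρ u) := by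
  have hnonempty : {x : ℝ | 0 ≤ x ∧ u ≤ cdf' ρ x}.Nonempty := by
    have hlim := ProbabilityTheory.tendsto_cdf_atTop ρ
    rw [← cdf'_eq_cdf_s11 hρ] at hlim
    obtain ⟨x, hux, hx⟩ :=
      ((hlim.eventually_const_lt hu).and (Filter.eventually_ge_atTop 0)).exists
    exact ⟨x, hx, hux.le⟩
  have hright : Filter.Tendsto (cdf' ρ) (nhdsWithin (qf ρ u) (Ioi (qf ρ u)))
      (nhds (cdf' ρ (qf ρ u))) := by
    rw [cdf'_eq_cdf_s11 hρ]
    exact ((ProbabilityTheory.cdf ρ).right_continuous _).mono_left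
      (nhdsWithin_mono _ Ioi_subset_Ici_self)
  refine ge_of_tendsto hright ?_
  filter_upwards [self_mem_nhdsWithin] with y hy
  obtain ⟨z, hz, hzy⟩ := exists_lt_of_csInf_lt hnonempty hy
  exact hz.2.trans (monotone_cdf' ρ hzy.le)

lemma qf_le_iff_s11 (hρ : ρ (Iio 0) = 0) {u x : ℝ} (hu : u ∈ Ioo (0 : ℝ) 1) :
    qf ρ u ≤ x ↔ u ≤ cdf' ρ x := by
  refine ⟨fun h => (le_cdf'_qf hρ hu.2).trans (monotone_cdf' ρ h), fun h => ?_⟩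
  have hx : 0 ≤ x := by
    by_contra! hneg
    exact (hu.1.trans_le h).ne' (cdf'_of_neg ρ hneg)
  exact csInf_le ⟨0, fun _ hy => hy.1⟩ ⟨hx, h⟩

lemma monotoneOn_qf_s11 (hρ : ρ (Iio 0) = 0) : MonotoneOn (qf ρ) (Ioo 0 1) := fun _ hu _ hv huv =>
  (qf_le_iff_s11 hρ hu).2 (huv.trans (le_cdf'_qf hρ hv.2))

lemma aemeasurable_qf_s11 (hρ : ρ (Iio 0) = 0) : AEMeasurable (qf ρ) (volume.restrict (Ioo 0 1)) :=
  aemeasurable_restrict_of_monotoneOn measurableSet_Ioo (monotoneOn_qf_s11 hρ)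

lemma preimage_qf_Iic_ae_eq (hρ : ρ (Iio 0) = 0) (x : ℝ) :
    (qf ρ ⁻¹' Iic x ∩ Ioo 0 1 : Set ℝ) =ᵐ[volume] Ioc 0 (cdf' ρ x) := by
  have hpreimage : qf ρ ⁻¹' Iic x ∩ Ioo 0 1 = Iic (cdf' ρ x) ∩ Ioo 0 1 := by
    ext u
    exact and_congr_left (qf_le_iff_s11 hρ)
  have hIoc : Iic (cdf' ρ x) ∩ Ioc 0 1 = Ioc 0 (cdf' ρ x) := by
    rw [inter_comm, Ioc_inter_Iic, min_eq_right (cdf'_mem_Icc ρ x).2]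
  rw [hpreimage, ← hIoc]
  exact (ae_eq_refl _).inter Ioo_ae_eq_Ioc

lemma map_qf_s11 (hρ : ρ (Iio 0) = 0) : (volume.restrict (Ioo 0 1)).map (qf ρ) = ρ := by
  refine (Measure.ext_of_Iic _ _ fun x => ?_).symm
  rw [Measure.map_apply_of_aemeasurable (aemeasurable_qf_s11 hρ) measurableSet_Iic,
    Measure.restrict_apply' measurableSet_Ioo, measure_congr (preimage_qf_Iic_ae_eq hρ x),
    Real.volume_Ioc, sub_zero, cdf'_eq_cdf_s11 hρ, ProbabilityTheory.ofReal_cdf]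

variable {E : Type*} [NormedAddCommGroup E] {φ : ℝ → E}

lemma intervalIntegrable_comp_qf (hρ : ρ (Iio 0) = 0) (hφ : Integrable φ ρ) :
    IntervalIntegrable (fun u => φ (qf ρ u)) volume 0 1 := by
  rw [intervalIntegrable_iff_integrableOn_Ioo_of_le zero_le_one]
  rw [← map_qf_s11 hρ] at hφ
  exact hφ.comp_aemeasurable (aemeasurable_qf_s11 hρ)

variable [NormedSpace ℝ E]

lemma integral_comp_qf_s11 (hρ : ρ (Iio 0) = 0) (hφ : AEStronglyMeasurable φ ρ) :
    ∫ u in (0 : ℝ)..1, φ (qf ρ u) = ∫ s, φ s ∂ρ := by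
  rw [← map_qf_s11 hρ] at hφ
  rw [intervalIntegral.integral_of_le zero_le_one, integral_Ioc_eq_integral_Ioo,
    ← integral_map (aemeasurable_qf_s11 hρ) hφ, map_qf_s11 hρ]

lemma integral_comp_qf_cdf' (hρ : ρ (Iio 0) = 0) (hφ : AEStronglyMeasurable φ ρ) (x : ℝ) :
    ∫ u in (0 : ℝ)..cdf' ρ x, φ (qf ρ u) = ∫ s in Iic x, φ s ∂ρ := by
  have hq := aemeasurable_qf_s11 hρ
  rw [← map_qf_s11 hρ] at hφ
  conv_rhs => rw [← map_qf_s11 hρ]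
  rw [setIntegral_map measurableSet_Iic hφ hq,
    Measure.restrict_restrict₀ (hq.nullMeasurableSet_preimage measurableSet_Iic),
    setIntegral_congr_set (preimage_qf_Iic_ae_eq hρ x),
    intervalIntegral.integral_of_le (cdf'_nonneg ρ x)]

end Quantile

/-! ### The boundary curve -/

lemma integrable_exp_I_mul (ρ : Measure ℝ) [IsFiniteMeasure ρ] :
    Integrable (fun s : ℝ => Complex.exp (Complex.I * s)) ρ :=
  Integrable.of_bound (C := 1) (Continuous.aestronglyMeasurable (by fun_prop))
    (ae_of_all _ fun s => by rw [mul_comm, Complex.norm_exp_ofReal_mul_I])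

lemma Zc_cdf'_mem_CCS (ρ : Measure ℝ) [IsProbabilityMeasure ρ] (x : ℝ) :
    Zc ρ (cdf' ρ x) ∈ CCS ρ :=
  subset_convexHull ℝ _ (mem_image_of_mem _ (cdf'_mem_Icc ρ x))

section Curve

variable {ρ : Measure ℝ} [IsProbabilityMeasure ρ]

lemma Zc_one (hρ : ρ (Iio 0) = 0) : Zc ρ 1 = ∫ s, Complex.exp (Complex.I * s) ∂ρ :=
  integral_comp_qf_s11 hρ (integrable_exp_I_mul ρ).aestronglyMeasurable

lemma Zc_cdf' (hρ : ρ (Iio 0) = 0) (x : ℝ) :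
    Zc ρ (cdf' ρ x) = ∫ s in Iic x, Complex.exp (Complex.I * s) ∂ρ :=
  integral_comp_qf_cdf' hρ (integrable_exp_I_mul ρ).aestronglyMeasurable x

lemma intervalIntegrable_exp_qf (hρ : ρ (Iio 0) = 0) {a b : ℝ} (ha : a ∈ Icc (0 : ℝ) 1)
    (hb : b ∈ Icc (0 : ℝ) 1) :
    IntervalIntegrable (fun u => Complex.exp (Complex.I * qf ρ u)) volume a b :=
  (intervalIntegrable_comp_qf hρ (integrable_exp_I_mul ρ)).mono_set
    (uIcc_subset_uIcc (Icc_subset_uIcc ha) (Icc_subset_uIcc hb))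

lemma isCompact_CCS (hρ : ρ (Iio 0) = 0) : IsCompact (CCS ρ) := by
  have hcont : ContinuousOn (Zc ρ) (uIcc 0 1) := intervalIntegral.continuousOn_primitive_interval'
    (intervalIntegrable_exp_qf hρ (by simp) (by simp)) left_mem_uIcc
  rw [uIcc_of_le zero_le_one] at hcont
  exact isCompact_convexHull_of_isCompact (isCompact_Icc.image_of_continuousOn hcont)

lemma outerNormal_Zc_sub (hρ : ρ (Iio 0) = 0) (x : ℝ) {a b : ℝ} (ha : a ∈ Icc (0 : ℝ) 1)
    (hb : b ∈ Icc (0 : ℝ) 1) :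
    outerNormal x (Zc ρ b) - outerNormal x (Zc ρ a) = ∫ u in a..b, sin (x - qf ρ u) := by
  have h0 : (0 : ℝ) ∈ Icc (0 : ℝ) 1 := by simp
  rw [← map_sub, Zc, Zc, intervalIntegral.integral_interval_sub_left
    (intervalIntegrable_exp_qf hρ h0 hb) (intervalIntegrable_exp_qf hρ h0 ha),
    ← (outerNormal x).intervalIntegral_comp_comm (intervalIntegrable_exp_qf hρ ha hb)]
  simp only [outerNormal_exp]

lemma monotoneOn_outerNormal_Zc (hρ : ρ (Iio 0) = 0) (x : ℝ) :
    MonotoneOn (fun t => outerNormal x (Zc ρ t)) (Icc (cdf' ρ (x - π)) (cdf' ρ x)) := by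
  intro a ha b hb hab
  have ha' := Icc_subset_Icc (cdf'_mem_Icc ρ _).1 (cdf'_mem_Icc ρ _).2 ha
  have hb' := Icc_subset_Icc (cdf'_mem_Icc ρ _).1 (cdf'_mem_Icc ρ _).2 hb
  rw [← sub_nonneg, outerNormal_Zc_sub hρ x ha' hb', intervalIntegral.integral_of_le hab,
    integral_Ioc_eq_integral_Ioo]
  refine setIntegral_nonneg measurableSet_Ioo fun u hu => ?_
  have hu' : u ∈ Ioo (0 : ℝ) 1 := Ioo_subset_Ioo ha'.1 hb'.2 hu
  have hle : qf ρ u ≤ x := (qf_le_iff_s11 hρ hu').2 (hu.2.le.trans hb.2)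
  have hlt : x - π < qf ρ u := by
    rw [← not_le, qf_le_iff_s11 hρ hu', not_le]
    exact ha.1.trans_lt hu.1
  exact sin_nonneg_of_nonneg_of_le_pi (by linarith) (by linarith)

lemma antitoneOn_outerNormal_Zc (hρ : ρ (Iio 0) = 0) (x : ℝ) :
    AntitoneOn (fun t => outerNormal x (Zc ρ t)) (Icc (cdf' ρ x) (cdf' ρ (x + π))) := by
  have hmono := monotoneOn_outerNormal_Zc hρ (x + π)
  rw [add_sub_cancel_right, outerNormal_antiperiodic x] at hmono
  simpa only [neg_apply, neg_neg] using hmono.neg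

end Curve

/-- Membership in the class `M⁰_T`: probability measures on `[0, 2π)`, identified with the circle
`T`, whose first Fourier coefficient vanishes. The last condition says that the curve `Zc ρ` with
tangent angles distributed according to `ρ` closes up. -/
structure IsClosingMeasure (ρ : Measure ℝ) : Prop extends IsProbabilityMeasure ρ where
  measure_compl_Ico : ρ (Ico 0 (2 * π))ᶜ = 0
  integral_exp : ∫ s, Complex.exp (Complex.I * s) ∂ρ = 0

namespace IsClosingMeasure

variable {ρ : Measure ℝ}

lemma measure_Iio_zero (hρ : IsClosingMeasure ρ) : ρ (Iio 0) = 0 :=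
  measure_mono_null (t := (Ico 0 (2 * π))ᶜ) (fun _ hx h => absurd h.1 (not_le.2 hx))
    hρ.measure_compl_Ico

lemma cdf'_eq_one (hρ : IsClosingMeasure ρ) {x : ℝ} (hx : 2 * π ≤ x) : cdf' ρ x = 1 := by
  have := hρ.toIsProbabilityMeasure
  have hsupp : ρ (Icc 0 x)ᶜ = 0 := measure_mono_null
    (compl_subset_compl.2 (Ico_subset_Icc_self.trans (Icc_subset_Icc_right hx)))
    hρ.measure_compl_Ico
  rw [cdf', (prob_compl_eq_zero_iff measurableSet_Icc).1 hsupp, ENNReal.toReal_one]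

lemma outerNormal_Zc_zero_eq_one (hρ : IsClosingMeasure ρ) (x : ℝ) :
    outerNormal x (Zc ρ 0) = outerNormal x (Zc ρ 1) := by
  have := hρ.toIsProbabilityMeasure
  rw [Zc_one hρ.measure_Iio_zero, hρ.integral_exp, Zc, intervalIntegral.integral_same]

-- `x` and `x + 2π` give the same functional, hence a second arc on which it increases.
lemma monotoneOn_outerNormal_Zc_last (hρ : IsClosingMeasure ρ) {x : ℝ} (hx : 0 ≤ x) :
    MonotoneOn (fun t => outerNormal x (Zc ρ t)) (Icc (cdf' ρ (x + π)) 1) := by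
  have := hρ.toIsProbabilityMeasure
  have hmono := monotoneOn_outerNormal_Zc hρ.measure_Iio_zero (x + 2 * π)
  rwa [outerNormal_periodic x, hρ.cdf'_eq_one (x := x + 2 * π) (by linarith),
    show x + 2 * π - π = x + π by ring] at hmono

lemma antitoneOn_outerNormal_Zc_first (hρ : IsClosingMeasure ρ) {x : ℝ} (hx : x < 2 * π) :
    AntitoneOn (fun t => outerNormal x (Zc ρ t)) (Icc 0 (cdf' ρ (x - π))) := by
  have := hρ.toIsProbabilityMeasure
  have hanti := antitoneOn_outerNormal_Zc hρ.measure_Iio_zero (x - 2 * π)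
  rwa [outerNormal_periodic.sub_eq x, cdf'_of_neg ρ (x := x - 2 * π) (by linarith),
    show x - 2 * π + π = x - π by ring] at hanti

lemma outerNormal_Zc_le_of_le (hρ : IsClosingMeasure ρ) {x t : ℝ} (hx : x < 2 * π)
    (ht : 0 ≤ t) (htx : t ≤ cdf' ρ x) :
    outerNormal x (Zc ρ t) ≤ outerNormal x (Zc ρ (cdf' ρ x)) := by
  have := hρ.toIsProbabilityMeasure
  rcases le_or_gt (cdf' ρ (x - π)) t with hcase | hcase
  · exact monotoneOn_outerNormal_Zc hρ.measure_Iio_zero x ⟨hcase, htx⟩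
      (right_mem_Icc.2 (hcase.trans htx)) htx
  have hπx : π ≤ x := by
    by_contra! h
    exact (ht.trans_lt hcase).ne' (cdf'_of_neg ρ (sub_neg.2 h))
  have hanti := antitoneOn_outerNormal_Zc hρ.measure_Iio_zero x
  rw [hρ.cdf'_eq_one (x := x + π) (by linarith)] at hanti
  have hx1 : cdf' ρ x ≤ 1 := (cdf'_mem_Icc ρ x).2
  calc outerNormal x (Zc ρ t)
      ≤ outerNormal x (Zc ρ 0) := hρ.antitoneOn_outerNormal_Zc_first hx
        (left_mem_Icc.2 (cdf'_nonneg ρ _)) ⟨ht, hcase.le⟩ ht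
    _ = outerNormal x (Zc ρ 1) := hρ.outerNormal_Zc_zero_eq_one x
    _ ≤ outerNormal x (Zc ρ (cdf' ρ x)) := hanti (left_mem_Icc.2 hx1) (right_mem_Icc.2 hx1) hx1

lemma outerNormal_Zc_le_of_ge (hρ : IsClosingMeasure ρ) {x t : ℝ} (hx : 0 ≤ x)
    (ht : t ≤ 1) (hxt : cdf' ρ x ≤ t) :
    outerNormal x (Zc ρ t) ≤ outerNormal x (Zc ρ (cdf' ρ x)) := by
  have := hρ.toIsProbabilityMeasure
  rcases le_or_gt t (cdf' ρ (x + π)) with hcase | hcase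
  · exact antitoneOn_outerNormal_Zc hρ.measure_Iio_zero x (left_mem_Icc.2 (hxt.trans hcase))
      ⟨hxt, hcase⟩ hxt
  have hxπ : x < π := by
    by_contra! h
    exact (hcase.trans_le ht).ne (hρ.cdf'_eq_one (by linarith))
  have hmono := monotoneOn_outerNormal_Zc hρ.measure_Iio_zero x
  rw [cdf'_of_neg ρ (sub_neg.2 hxπ)] at hmono
  have hx0 : 0 ≤ cdf' ρ x := cdf'_nonneg ρ x
  calc outerNormal x (Zc ρ t)
      ≤ outerNormal x (Zc ρ 1) := hρ.monotoneOn_outerNormal_Zc_last hx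
        ⟨hcase.le, ht⟩ (right_mem_Icc.2 (cdf'_mem_Icc ρ _).2) ht
    _ = outerNormal x (Zc ρ 0) := (hρ.outerNormal_Zc_zero_eq_one x).symm
    _ ≤ outerNormal x (Zc ρ (cdf' ρ x)) := hmono (left_mem_Icc.2 hx0) (right_mem_Icc.2 hx0) hx0

lemma isMaxOn_outerNormal_CCS (hρ : IsClosingMeasure ρ) {x : ℝ} (hx : x ∈ Ico 0 (2 * π)) :
    IsMaxOn (outerNormal x) (CCS ρ) (Zc ρ (cdf' ρ x)) := by
  refine isMaxOn_convexHull ((outerNormal x).toLinearMap.convexOn (convex_convexHull ℝ _)) ?_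
  rintro _ ⟨t, ht, rfl⟩
  rcases le_total t (cdf' ρ x) with htx | hxt
  · exact hρ.outerNormal_Zc_le_of_le hx.2 ht.1 htx
  · exact hρ.outerNormal_Zc_le_of_ge hx.1 ht.2 hxt

end IsClosingMeasure

lemma exists_angle_isMaxOn_CCS (f : ℂ →L[ℝ] ℝ) :
    ∃ x, ∀ ρ, IsClosingMeasure ρ → IsMaxOn f (CCS ρ) (Zc ρ (cdf' ρ x)) := by
  obtain ⟨A, x, hA, hx, rfl⟩ := exists_eq_smul_outerNormal f
  exact ⟨x, fun ρ hρ _ hz => mul_le_mul_of_nonneg_left (hρ.isMaxOn_outerNormal_CCS hx hz) hA⟩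

/-! ### Mixtures of closing measures -/

section Mixture

variable {μ ν : Measure ℝ} {a b : ℝ}

lemma Zc_cdf'_mixture [IsProbabilityMeasure μ] [IsProbabilityMeasure ν] (hμ : μ (Iio 0) = 0)
    (hν : ν (Iio 0) = 0) (ha : 0 ≤ a) (hb : 0 ≤ b) (hab : a + b = 1) (x : ℝ) :
    letI ρ := ENNReal.ofReal a • μ + ENNReal.ofReal b • ν
    Zc ρ (cdf' ρ x) = a • Zc μ (cdf' μ x) + b • Zc ν (cdf' ν x) := by
  have := isProbabilityMeasure_ofReal_smul_add (μ := μ) (ν := ν) ha hb hab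
  rw [Zc_cdf' (by simp [hμ, hν]), Zc_cdf' hμ, Zc_cdf' hν, Measure.restrict_add,
    Measure.restrict_smul, Measure.restrict_smul,
    integral_ofReal_smul_add ha hb (integrable_exp_I_mul _) (integrable_exp_I_mul _)]

lemma IsClosingMeasure.mixture (hμ : IsClosingMeasure μ) (hν : IsClosingMeasure ν) (ha : 0 ≤ a)
    (hb : 0 ≤ b) (hab : a + b = 1) :
    IsClosingMeasure (ENNReal.ofReal a • μ + ENNReal.ofReal b • ν) := by
  have := hμ.toIsProbabilityMeasure
  have := hν.toIsProbabilityMeasure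
  refine ⟨isProbabilityMeasure_ofReal_smul_add ha hb hab,
    by simp [hμ.measure_compl_Ico, hν.measure_compl_Ico], ?_⟩
  rw [integral_ofReal_smul_add ha hb (integrable_exp_I_mul _) (integrable_exp_I_mul _),
    hμ.integral_exp, hν.integral_exp, smul_zero, smul_zero, add_zero]

end Mixture

theorem stmt11 (μ ν : Measure ℝ) [IsProbabilityMeasure μ] [IsProbabilityMeasure ν]
    (hμs : μ (Set.Ico 0 (2*π))ᶜ = 0) (hνs : ν (Set.Ico 0 (2*π))ᶜ = 0)
    (hμ0 : ∫ x, Complex.exp (Complex.I * x) ∂μ = 0)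
    (hν0 : ∫ x, Complex.exp (Complex.I * x) ∂ν = 0)
    (l : ℝ) (hl : l ∈ Set.Icc (0:ℝ) 1) :
    CCS (ENNReal.ofReal l • μ + ENNReal.ofReal (1-l) • ν) = l • CCS μ + (1-l) • CCS ν := by
  have hl' : 0 ≤ 1 - l := sub_nonneg.2 hl.2
  have hμ : IsClosingMeasure μ := ⟨inferInstance, hμs, hμ0⟩
  have hν : IsClosingMeasure ν := ⟨inferInstance, hνs, hν0⟩
  have hρ := hμ.mixture hν hl.1 hl' (add_sub_cancel l 1)
  have := hρ.toIsProbabilityMeasure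
  refine eq_of_forall_exists_common_isMaxOn (convex_convexHull ℝ _)
    (isCompact_CCS hρ.measure_Iio_zero).isClosed
    (((convex_convexHull ℝ _).smul l).add ((convex_convexHull ℝ _).smul (1 - l)))
    (((isCompact_CCS hμ.measure_Iio_zero).smul l).add
      ((isCompact_CCS hν.measure_Iio_zero).smul (1 - l))).isClosed fun f => ?_
  obtain ⟨x, hmax⟩ := exists_angle_isMaxOn_CCS f
  have hZ := Zc_cdf'_mixture hμ.measure_Iio_zero hν.measure_Iio_zero hl.1 hl'
    (add_sub_cancel l 1) x
  refine ⟨_, ⟨Zc_cdf'_mem_CCS _ x, ?_⟩, hmax _ hρ, ?_⟩ <;> rw [hZ]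
  · exact add_mem_add (smul_mem_smul_set (Zc_cdf'_mem_CCS μ x))
      (smul_mem_smul_set (Zc_cdf'_mem_CCS ν x))
  · exact isMaxOn_smul_add_smul hl.1 hl' (hmax μ hμ) (hmax ν hν)
end
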